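/- For all FNM guarded processes p, q, r the following laws hold up to structure-preserving bisimilarity: p + (q + r) ~sp (p + q) + r (associativity); p + q ~sp q + p (commutativity); p + 0 ~sp p provided p ≠ 0 (identity); and p + p ~sp p provided p ≠ 0 (idempotency). -/

import Mathlib

/-- Actions of FNM: the invisible action τ, input actions `a ∈ L` and
output actions `ā ∈ L̄` (here `α` plays the role of the finite set `L`). -/
inductive Act (α : Type) where
  | tau : Act α
  | inp : α → Act α
  | out : α → Act α
  deriving DecidableEq

/-- (Open) FNM terms: `0`, the variable `x`, action prefixing `mu.t`, strong
prefixing `a̲.s`, choice `s+s`, constants `C`, parallel `t|t` and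
restriction `(νa)p`.  The syntactic categories are carved out below. -/
inductive FNM (α κ : Type) where
  | nil : FNM α κ
  | var : FNM α κ
  | pref : Act α → FNM α κ → FNM α κ
  | spref : α → FNM α κ → FNM α κ
  | sum : FNM α κ → FNM α κ → FNM α κ
  | const : κ → FNM α κ
  | par : FNM α κ → FNM α κ → FNM α κ
  | res : α → FNM α κ → FNM α κ
  deriving DecidableEq

namespace FNM

variable {α κ : Type}

mutual
  /-- Guarded terms: syntactic category `s ::= 0 | mu.t | a̲.s | s+s`
  (with `t` restriction-free). -/
  def Grd : FNM α κ → Prop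
    | .nil => True
    | .var => False
    | .pref _ t => RF t
    | .spref _ s => Grd s
    | .sum s1 s2 => Grd s1 ∧ Grd s2
    | .const _ => False
    | .par _ _ => False
    | .res _ _ => False
  /-- Restriction-free terms: syntactic category `t ::= q | t|t`, where
  `q ::= s | C | x` is the category of sequential terms. -/
  def RF : FNM α κ → Prop
    | .nil => True
    | .var => True
    | .pref _ t => RF t
    | .spref _ s => Grd s
    | .sum s1 s2 => Grd s1 ∧ Grd s2
    | .const _ => True
    | .par t1 t2 => RF t1 ∧ RF t2
    | .res _ _ => False
end

/-- Sequential terms: `q ::= s | C | x`. -/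
def Seq (t : FNM α κ) : Prop :=
  Grd t ∨ (∃ c, t = FNM.const c) ∨ t = FNM.var

/-- General terms: `p ::= t | (νa)p`. -/
def Gen : FNM α κ → Prop
  | .res _ p => Gen p
  | t => RF t

/-- Closed terms: no occurrence of the variable. -/
def VarFree : FNM α κ → Prop
  | .nil => True
  | .var => False
  | .pref _ t => VarFree t
  | .spref _ s => VarFree s
  | .sum s1 s2 => VarFree s1 ∧ VarFree s2
  | .const _ => True
  | .par t1 t2 => VarFree t1 ∧ VarFree t2
  | .res _ p => VarFree p

/-- Substitution `p{r/x}` of the term `r` for every occurrence of the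
variable `x` in `p` (constants are dealt with via the environment). -/
def subst (r : FNM α κ) : FNM α κ → FNM α κ
  | .nil => .nil
  | .var => r
  | .pref mu t => .pref mu (subst r t)
  | .spref a s => .spref a (subst r s)
  | .sum s1 s2 => .sum (subst r s1) (subst r s2)
  | .const c => .const c
  | .par t1 t2 => .par (subst r t1) (subst r t2)
  | .res a p => .res a (subst r p)

/-- `mu` uses the name `a`. -/
def _root_.Act.uses (a : α) : Act α → Prop
  | .tau => False
  | .inp b => b = a
  | .out b => b = a

/-- `a` occurs free in a term (through an environment `env` giving the body
of each process constant). -/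
inductive FreeIn (env : κ → FNM α κ) (a : α) : FNM α κ → Prop where
  | pref_act {mu : Act α} {t : FNM α κ} : mu.uses a → FreeIn env a (.pref mu t)
  | pref_cont {mu : Act α} {t : FNM α κ} : FreeIn env a t → FreeIn env a (.pref mu t)
  | spref_act {s : FNM α κ} : FreeIn env a (.spref a s)
  | spref_cont {b : α} {s : FNM α κ} : FreeIn env a s → FreeIn env a (.spref b s)
  | sum_l {s1 s2 : FNM α κ} : FreeIn env a s1 → FreeIn env a (.sum s1 s2)
  | sum_r {s1 s2 : FNM α κ} : FreeIn env a s2 → FreeIn env a (.sum s1 s2)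
  | par_l {t1 t2 : FNM α κ} : FreeIn env a t1 → FreeIn env a (.par t1 t2)
  | par_r {t1 t2 : FNM α κ} : FreeIn env a t2 → FreeIn env a (.par t1 t2)
  | res {b : α} {p : FNM α κ} : a ≠ b → FreeIn env a p → FreeIn env a (.res b p)
  | const {c : κ} : FreeIn env a (env c) → FreeIn env a (.const c)

/-- `a` occurs bound (by a restriction) in a term. -/
inductive BoundIn (env : κ → FNM α κ) (a : α) : FNM α κ → Prop where
  | res_here {p : FNM α κ} : BoundIn env a (.res a p)
  | res_in {b : α} {p : FNM α κ} : BoundIn env a p → BoundIn env a (.res b p)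
  | pref {mu : Act α} {t : FNM α κ} : BoundIn env a t → BoundIn env a (.pref mu t)
  | spref {b : α} {s : FNM α κ} : BoundIn env a s → BoundIn env a (.spref b s)
  | sum_l {s1 s2 : FNM α κ} : BoundIn env a s1 → BoundIn env a (.sum s1 s2)
  | sum_r {s1 s2 : FNM α κ} : BoundIn env a s2 → BoundIn env a (.sum s1 s2)
  | par_l {t1 t2 : FNM α κ} : BoundIn env a t1 → BoundIn env a (.par t1 t2)
  | par_r {t1 t2 : FNM α κ} : BoundIn env a t2 → BoundIn env a (.par t1 t2)
  | const {c : κ} : BoundIn env a (env c) → BoundIn env a (.const c)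

end FNM

/-- A place of the net `N_FNM`: a sequential (extended) term, rendered as a
pure sequential term together with the record `ρ : α → Bool` of which names
have been replaced by their restricted counterparts (`ρ a = true` represents
the substitution `{a'/a}`). -/
abbrev Place (α κ : Type) := FNM α κ × (α → Bool)

namespace FNM

variable {α κ : Type} [DecidableEq α] [DecidableEq κ] [Fintype α]

/-- The decomposition function `dec`, mapping (extended) terms to markings:
`dec(0) = θ`, `dec(p|q) = dec(p) ⊕ dec(q)`, `dec((νa)p) = dec(p){a'/a}`, and
a sequential term other than `0` is mapped to a single place. -/
def dec (ρ : α → Bool) : FNM α κ → Multiset (Place α κ)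
  | .nil => 0
  | .par t1 t2 => dec ρ t1 + dec ρ t2
  | .res a p => dec (Function.update ρ a true) p
  | t => {(t, ρ)}

end FNM

/-- Extended visible actions: inputs and outputs, possibly restricted
(`inp a true` represents `a'`, `out a false` represents `ā`, etc.). -/
inductive XAct (α : Type) where
  | inp : α → Bool → XAct α
  | out : α → Bool → XAct α

/-- Labels of net transitions: `τ` is the empty sequence, and otherwise a
sequence of extended actions. -/
abbrev Lbl (α : Type) := List (XAct α)

/-- An extended action carries no restricted name. -/
def XAct.unres {α : Type} : XAct α → Prop
  | .inp _ r => r = false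
  | .out _ r => r = false

/-- The label contributed by prefix `mu` under the restriction record `ρ`. -/
def actL {α : Type} (ρ : α → Bool) : Act α → Lbl α
  | .tau => []
  | .inp a => [XAct.inp a (ρ a)]
  | .out a => [XAct.out a (ρ a)]

/-- The synchronization relation `Sync(σ1, σ2, σ)`: `Sync(α, ᾱ, τ)`,
`Sync(aσ, ā, σ)` and `Sync(ā, aσ, σ)` for `σ ≠ ε` (also on restricted
actions). -/
inductive Sync {α : Type} : Lbl α → Lbl α → Lbl α → Prop where
  | inout (a : α) (r : Bool) : Sync [XAct.inp a r] [XAct.out a r] []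
  | outin (a : α) (r : Bool) : Sync [XAct.out a r] [XAct.inp a r] []
  | seqL (a : α) (r : Bool) (σ : Lbl α) :
      σ ≠ [] → Sync (XAct.inp a r :: σ) [XAct.out a r] σ
  | seqR (a : α) (r : Bool) (σ : Lbl α) :
      σ ≠ [] → Sync [XAct.out a r] (XAct.inp a r :: σ) σ

namespace FNM

variable {α κ : Type} [DecidableEq α] [DecidableEq κ] [Fintype α]

/-- A marking is admissible if for no name `a` both `a` and its restricted
counterpart `a'` occur free in it. -/
def Adm (env : κ → FNM α κ) (m : Multiset (Place α κ)) : Prop :=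
  ∀ a : α, ¬ ((∃ p ∈ m, FreeIn env a p.1 ∧ p.2 a = false) ∧
              (∃ p ∈ m, FreeIn env a p.1 ∧ p.2 a = true))

/-- The net transitions of `N_FNM`, generated by the rules (pref), (sum₁),
(sum₂), (cons), (s-pref) and (s-com). -/
inductive Tr (env : κ → FNM α κ) :
    Multiset (Place α κ) → Lbl α → Multiset (Place α κ) → Prop where
  | pref (ρ : α → Bool) (mu : Act α) (t : FNM α κ) :
      Tr env {(FNM.pref mu t, ρ)} (actL ρ mu) (dec ρ t)
  | sum1 (ρ : α → Bool) (s1 s2 : FNM α κ) (σ : Lbl α) (m : Multiset (Place α κ)) :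
      Tr env (dec ρ s1) σ m → Tr env {(FNM.sum s1 s2, ρ)} σ m
  | sum2 (ρ : α → Bool) (s1 s2 : FNM α κ) (σ : Lbl α) (m : Multiset (Place α κ)) :
      Tr env (dec ρ s2) σ m → Tr env {(FNM.sum s1 s2, ρ)} σ m
  | cons (ρ : α → Bool) (c : κ) (σ : Lbl α) (m : Multiset (Place α κ)) :
      Tr env (dec ρ (env c)) σ m → Tr env {(FNM.const c, ρ)} σ m
  | spref (ρ : α → Bool) (a : α) (s : FNM α κ) (σ : Lbl α) (m : Multiset (Place α κ)) :
      Tr env (dec ρ s) σ m →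
      Tr env {(FNM.spref a s, ρ)} (XAct.inp a (ρ a) :: σ) m
  | scom (m1 m2 m1' m2' : Multiset (Place α κ)) (σ1 σ2 σ : Lbl α) :
      Tr env m1 σ1 m1' → Tr env m2 σ2 m2' →
      Adm env (m1 + m2) → Sync σ1 σ2 σ →
      Tr env (m1 + m2) σ (m1' + m2')

/-- Tritions of the net `N_FNM`: only those whose label contains no
restricted action are kept. -/
def NetTr (env : κ → FNM α κ) (m : Multiset (Place α κ)) (σ : Lbl α)
    (m' : Multiset (Place α κ)) : Prop :=
  Tr env m σ m' ∧ ∀ x ∈ σ, x.unres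

/-- First projection of a linking. -/
def pi1 (l : Multiset (Place α κ × Place α κ)) : Multiset (Place α κ) :=
  l.map Prod.fst

/-- Second projection of a linking. -/
def pi2 (l : Multiset (Place α κ × Place α κ)) : Multiset (Place α κ) :=
  l.map Prod.snd

/-- Structure-preserving bisimulation on the net `N_FNM`. -/
def IsSPB (env : κ → FNM α κ) (R : Set (Multiset (Place α κ × Place α κ))) : Prop :=
  ∀ l ∈ R, ∀ c ≤ l,
    (∀ σ m1, NetTr env (pi1 c) σ m1 →
      ∃ m2 cb, NetTr env (pi2 c) σ m2 ∧
        pi1 cb = m1 ∧ pi2 cb = m2 ∧ l - c + cb ∈ R) ∧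
    (∀ σ m2, NetTr env (pi2 c) σ m2 →
      ∃ m1 cb, NetTr env (pi1 c) σ m1 ∧
        pi1 cb = m1 ∧ pi2 cb = m2 ∧ l - c + cb ∈ R)

/-- `p ~sp q`: some structure-preserving bisimulation contains a linking
projecting on `dec(p)` and `dec(q)`. -/
def SPEq (env : κ → FNM α κ) (p q : FNM α κ) : Prop :=
  ∃ R, IsSPB env R ∧ ∃ l ∈ R,
    pi1 l = dec (fun _ => false) p ∧ pi2 l = dec (fun _ => false) q

end FNM

namespace FNM

variable {α κ : Type} [DecidableEq α] [DecidableEq κ] [Fintype α]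

theorem tr_ne_zero {env : κ → FNM α κ} {m : Multiset (Place α κ)} {σ m'}
    (h : Tr env m σ m') : m ≠ 0 := by
  induction h with
  | scom m1 m2 m1' m2' σ1 σ2 σ _ _ _ _ ih1 ih2 =>
    intro h0
    exact ih1 (add_eq_zero.mp h0).1
  | _ => exact Multiset.singleton_ne_zero _

theorem tr_sum_iff {env : κ → FNM α κ} {s1 s2 : FNM α κ} {ρ : α → Bool} {σ m'} :
    Tr env {(FNM.sum s1 s2, ρ)} σ m' ↔ (Tr env (dec ρ s1) σ m' ∨ Tr env (dec ρ s2) σ m') := by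
  constructor
  · intro h
    generalize hm : ({(FNM.sum s1 s2, ρ)} : Multiset (Place α κ)) = m at h
    cases h with
    | scom m1 m2 m1' m2' σ1 σ2 σ h1 h2 _ _ =>
      exfalso
      have hc := congrArg Multiset.card hm
      have h1' := Multiset.card_pos.mpr (tr_ne_zero h1)
      have h2' := Multiset.card_pos.mpr (tr_ne_zero h2)
      simp only [Multiset.card_singleton, Multiset.card_add] at hc
      omega
    | sum1 ρ' a b σ m h =>
      have := Multiset.singleton_inj.mp hm
      simp only [Prod.mk.injEq, FNM.sum.injEq] at this
      obtain ⟨⟨rfl, rfl⟩, rfl⟩ := this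
      exact Or.inl h
    | sum2 ρ' a b σ m h =>
      have := Multiset.singleton_inj.mp hm
      simp only [Prod.mk.injEq, FNM.sum.injEq] at this
      obtain ⟨⟨rfl, rfl⟩, rfl⟩ := this
      exact Or.inr h
    | _ =>
      have := Multiset.singleton_inj.mp hm
      simp at this
  · rintro (h | h)
    · exact Tr.sum1 _ _ _ _ _ h
    · exact Tr.sum2 _ _ _ _ _ h

theorem dec_grd {ρ : α → Bool} {p : FNM α κ} (hp : Grd p) (h0 : p ≠ FNM.nil) :
    dec ρ p = {(p, ρ)} := by
  cases p <;> simp_all [dec, Grd]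

def diagL (m : Multiset (Place α κ)) : Multiset (Place α κ × Place α κ) :=
  m.map (fun x => (x, x))

theorem pi1_diagL (m : Multiset (Place α κ)) : pi1 (diagL m) = m := by
  simp [pi1, diagL]

theorem pi2_diagL (m : Multiset (Place α κ)) : pi2 (diagL m) = m := by
  simp [pi2, diagL]

theorem diagL_diag (m : Multiset (Place α κ)) : ∀ x ∈ diagL m, x.1 = x.2 := by
  intro x hx
  obtain ⟨y, _, rfl⟩ := Multiset.mem_map.mp hx
  rfl

theorem speq_of_tr {env : κ → FNM α κ} {p q : FNM α κ} {x y : Place α κ}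
    (hp : dec (fun _ => false) p = {x}) (hq : dec (fun _ => false) q = {y})
    (h : ∀ σ m, Tr env {x} σ m ↔ Tr env {y} σ m) : SPEq env p q := by
  refine ⟨{l | (∀ z ∈ l, z.1 = z.2) ∨ l = {(x, y)}}, ?_, {(x, y)}, Or.inr rfl, ?_, ?_⟩
  · intro l hl c hc
    have key : pi1 c = 0 ∧ pi2 c = 0 ∨ ((∀ σ m, Tr env (pi1 c) σ m ↔ Tr env (pi2 c) σ m) ∧
        ∀ z ∈ l - c, z.1 = z.2) := by
      rcases hl with hl | rfl
      · right
        have : pi1 c = pi2 c :=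
          Multiset.map_congr rfl (fun z hz => hl z (Multiset.mem_of_le hc hz))
        refine ⟨by simp [this], fun z hz => hl z (Multiset.mem_of_le (Multiset.sub_le_self _ _) hz)⟩
      · rcases Multiset.le_singleton.mp hc |> fun h => h with h0 | h0
        · left; simp [h0, pi1, pi2]
        · right; subst h0
          simpa [pi1, pi2] using h
    rcases key with ⟨k1, k2⟩ | ⟨k1, k2⟩
    · rw [k1, k2]
      exact ⟨fun σ m ht => absurd rfl (tr_ne_zero ht.1), fun σ m ht => absurd rfl (tr_ne_zero ht.1)⟩
    · have k3 : ∀ m, ∀ z ∈ l - c + diagL m, z.1 = z.2 := by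
        intro m z hz
        rcases Multiset.mem_add.mp hz with hz | hz
        · exact k2 z hz
        · exact diagL_diag m z hz
      exact ⟨fun σ m ht => ⟨m, diagL m, ⟨(k1 σ m).mp ht.1, ht.2⟩, pi1_diagL m, pi2_diagL m,
          Or.inl (k3 m)⟩,
        fun σ m ht => ⟨m, diagL m, ⟨(k1 σ m).mpr ht.1, ht.2⟩, pi1_diagL m, pi2_diagL m,
          Or.inl (k3 m)⟩⟩
  · simp [pi1, hp]
  · simp [pi2, hq]

theorem dec_sum {ρ : α → Bool} {p q : FNM α κ} :
    dec ρ (FNM.sum p q) = {(FNM.sum p q, ρ)} := by simp [dec]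

end FNM

open FNM in
/-- laws of the choice operator, up to structure-preserving
bisimilarity: associativity, commutativity, identity (`p + 0 ~sp p` if
`p ≠ 0`) and idempotency (`p + p ~sp p` if `p ≠ 0`), for all FNM guarded
processes `p, q, r`. -/
theorem speq_choice_laws {α κ : Type} [DecidableEq α] [DecidableEq κ]
    [Fintype α] [Finite κ]
    (env : κ → FNM α κ) (henv : ∀ c, Grd (env c) ∧ VarFree (env c))
    (p q r : FNM α κ) (hp : Grd p) (hq : Grd q) (hr : Grd r)
    (hpv : VarFree p) (hqv : VarFree q) (hrv : VarFree r) :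
    SPEq env (FNM.sum p (FNM.sum q r)) (FNM.sum (FNM.sum p q) r) ∧
    SPEq env (FNM.sum p q) (FNM.sum q p) ∧
    (p ≠ FNM.nil → SPEq env (FNM.sum p FNM.nil) p) ∧
    (p ≠ FNM.nil → SPEq env (FNM.sum p p) p) := by
  refine ⟨?_, ?_, ?_, ?_⟩
  · refine speq_of_tr dec_sum dec_sum fun σ m => ?_
    simp only [tr_sum_iff, dec_sum, or_assoc]
  · refine speq_of_tr dec_sum dec_sum fun σ m => ?_
    simp only [tr_sum_iff]
    exact or_comm
  · intro h0
    refine speq_of_tr dec_sum (dec_grd hp h0) fun σ m => ?_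
    rw [tr_sum_iff, dec_grd hp h0]
    refine or_iff_left fun h => tr_ne_zero h ?_
    simp [dec]
  · intro h0
    refine speq_of_tr dec_sum (dec_grd hp h0) fun σ m => ?_
    rw [tr_sum_iff, dec_grd hp h0, or_self]
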